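/- Let X ⊆ P² be a k-configuration of type (1,2,…,s) with s ≥ 2, and suppose there are exactly s + 1 lines in P² each containing exactly s points of X. Then the points of X are precisely the pairwise intersection points of these s + 1 lines. -/

import Mathlib

/-- The projective plane over a field `K`, as the projectivization of `K³`. -/
abbrev P2 (K : Type) [Field K] := Projectivization K (Fin 3 → K)

/-- A line in `P2 K`: a 2-dimensional linear subspace of `K³`. -/
structure ProjLine (K : Type) [Field K] where
  toSubmodule : Submodule K (Fin 3 → K)
  finrank_eq_two : Module.finrank K toSubmodule = 2

/-- The set of points of `P2 K` lying on a line. -/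
def ProjLine.points {K : Type} [Field K] (L : ProjLine K) : Set (P2 K) :=
  {p | p.submodule ≤ L.toSubmodule}

/-- The homogeneous prime ideal of a point of `P2 K`: the ideal generated by
the linear forms vanishing at the point. -/
noncomputable def pointIdeal {K : Type} [Field K] (p : P2 K) :
    Ideal (MvPolynomial (Fin 3) K) :=
  Ideal.span {f | f.IsHomogeneous 1 ∧ MvPolynomial.eval p.rep f = 0}

/-- The defining ideal `I_{mX} = ⋂_{P ∈ X} I_P^m` of the fat point scheme `mX`. -/
noncomputable def fatIdeal {K : Type} [Field K] (X : Set (P2 K)) (m : ℕ) :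
    Ideal (MvPolynomial (Fin 3) K) :=
  ⨅ p ∈ X, (pointIdeal p) ^ m

/-- The Hilbert function of `R/I`: `H(t) = dim_K R_t - dim_K I_t`. -/
noncomputable def hilb {K : Type} [Field K] (I : Ideal (MvPolynomial (Fin 3) K)) (t : ℕ) : ℕ :=
  Module.finrank K ↥(MvPolynomial.homogeneousSubmodule (Fin 3) K t) -
    Module.finrank K ↥(Submodule.restrictScalars K (I : Submodule (MvPolynomial (Fin 3) K) (MvPolynomial (Fin 3) K)) ⊓ MvPolynomial.homogeneousSubmodule (Fin 3) K t)

/-- The Hilbert function extended to `ℤ`, with `H(t) = 0` for `t < 0`. -/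
noncomputable def hilbZ {K : Type} [Field K] (I : Ideal (MvPolynomial (Fin 3) K)) (t : ℤ) : ℤ :=
  if t < 0 then 0 else hilb I t.toNat

/-- The first difference `ΔH(t) = H(t) - H(t-1)` of the Hilbert function. -/
noncomputable def deltaHilb {K : Type} [Field K] (I : Ideal (MvPolynomial (Fin 3) K)) (t : ℤ) : ℤ :=
  hilbZ I t - hilbZ I (t - 1)

/-- `X` is a k-configuration of type `(d 0, …, d (s-1))` defined using the subsets
`Xs 0, …, Xs (s-1)` and the (distinct) lines `Ls 0, …, Ls (s-1)`. -/
structure IsKConfig {K : Type} [Field K] {s : ℕ} (X : Set (P2 K)) (d : Fin s → ℕ)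
    (Xs : Fin s → Set (P2 K)) (Ls : Fin s → ProjLine K) : Prop where
  one_le : ∀ i, 1 ≤ d i
  strictMono : StrictMono d
  lines_distinct : Function.Injective Ls
  union_eq : X = ⋃ i, Xs i
  card_eq : ∀ i, (Xs i).ncard = d i
  subset_line : ∀ i, Xs i ⊆ (Ls i).points
  not_mem : ∀ i j : Fin s, j < i → ∀ p ∈ Xs j, p ∉ (Ls i).points

/-!
For a point `p` of `X` let `r p` be the number of the `s + 1` lines through `p`. Counting incidences
gives `∑ r p ≥ s (s + 1)`. Two distinct lines share at most one point, so counting ordered pairs of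
lines gives `∑ r p (r p - 1) ≤ s (s + 1)`. As `2 |X| ≤ s (s + 1)`, it follows that
`∑ (r p - 2)² = ∑ r p (r p - 1) - 3 ∑ r p + 4 |X| ≤ 0`. Hence every point of `X` lies on exactly two
of the lines, and equality holds in both counts, so any two of the lines meet in a point of `X`.
-/

open Finset

section OffDiag

variable {α : Type*} (t : Finset α)

theorem card_offDiag_add_card : #t.offDiag + #t = #t * #t := by
  rw [offDiag_card, Nat.sub_add_cancel (Nat.le_mul_self _)]

theorem three_mul_card_le_card_offDiag_add_four : 3 * #t ≤ #t.offDiag + 4 := by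
  have h := card_offDiag_add_card t
  zify at h ⊢
  linarith [sq_nonneg ((#t : ℤ) - 2)]

theorem card_eq_two_of_three_mul_card_eq (heq : 3 * #t = #t.offDiag + 4) : #t = 2 := by
  have hsq : ((#t : ℤ) - 2) ^ 2 = 0 := by
    have h := card_offDiag_add_card t
    zify at h heq
    linarith
  exact_mod_cast sub_eq_zero.mp (sq_eq_zero_iff.mp hsq)

theorem card_offDiag_of_card_eq_add_one {s : ℕ} (ht : #t = s + 1) :
    #t.offDiag = s * (s + 1) := by
  rw [offDiag_card, ht, ← Nat.sub_one_mul, Nat.add_sub_cancel]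

end OffDiag

section Incidence

variable {P Λ : Type*} {I : P → Λ → Prop} [∀ p l, Decidable (I p l)]
  {X : Finset P} {A : Finset Λ} {s : ℕ}

theorem sum_card_offDiag_bipartiteAbove :
    ∑ p ∈ X, #(A.bipartiteAbove I p).offDiag = ∑ q ∈ A.offDiag, #{p ∈ X | I p q.1 ∧ I p q.2} := by
  have offDiag_eq (p : P) : (A.bipartiteAbove I p).offDiag =
      A.offDiag.bipartiteAbove (fun p q => I p q.1 ∧ I p q.2) p := by
    ext q
    simp only [mem_offDiag, mem_bipartiteAbove]
    tauto
  simp_rw [offDiag_eq]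
  exact sum_card_bipartiteAbove_eq_sum_card_bipartiteBelow _

theorem card_mul_le_sum_card_bipartiteAbove (hAX : ∀ l ∈ A, s ≤ #(X.bipartiteBelow I l)) :
    #A * s ≤ ∑ p ∈ X, #(A.bipartiteAbove I p) := by
  rw [sum_card_bipartiteAbove_eq_sum_card_bipartiteBelow]
  exact card_nsmul_le_sum _ _ _ hAX

theorem sum_card_offDiag_bipartiteAbove_le
    (hI : (A : Set Λ).Pairwise fun l m => #{p ∈ X | I p l ∧ I p m} ≤ 1) :
    ∑ p ∈ X, #(A.bipartiteAbove I p).offDiag ≤ #A.offDiag := by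
  rw [sum_card_offDiag_bipartiteAbove, card_eq_sum_ones]
  refine sum_le_sum fun q hq => ?_
  obtain ⟨h₁, h₂, hne⟩ := mem_offDiag.mp hq
  exact hI h₁ h₂ hne

theorem sum_card_offDiag_add_four_le_sum_three_mul_card (hA : #A = s + 1)
    (hX : 2 * #X ≤ s * (s + 1))
    (hAX : ∀ l ∈ A, s ≤ #(X.bipartiteBelow I l))
    (hI : (A : Set Λ).Pairwise fun l m => #{p ∈ X | I p l ∧ I p m} ≤ 1) :
    ∑ p ∈ X, (#(A.bipartiteAbove I p).offDiag + 4) ≤ ∑ p ∈ X, 3 * #(A.bipartiteAbove I p) := by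
  calc ∑ p ∈ X, (#(A.bipartiteAbove I p).offDiag + 4)
      = ∑ p ∈ X, #(A.bipartiteAbove I p).offDiag + 4 * #X := by
        rw [sum_add_distrib, sum_const, smul_eq_mul, mul_comm 4]
    _ ≤ #A.offDiag + 2 * (s * (s + 1)) := by
        linarith [sum_card_offDiag_bipartiteAbove_le hI]
    _ = 3 * (#A * s) := by
        rw [card_offDiag_of_card_eq_add_one A hA, hA]
        ring
    _ ≤ 3 * ∑ p ∈ X, #(A.bipartiteAbove I p) :=
        Nat.mul_le_mul_left 3 (card_mul_le_sum_card_bipartiteAbove hAX)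
    _ = ∑ p ∈ X, 3 * #(A.bipartiteAbove I p) := mul_sum ..

theorem card_bipartiteAbove_eq_two (hA : #A = s + 1) (hX : 2 * #X ≤ s * (s + 1))
    (hAX : ∀ l ∈ A, s ≤ #(X.bipartiteBelow I l))
    (hI : (A : Set Λ).Pairwise fun l m => #{p ∈ X | I p l ∧ I p m} ≤ 1) :
    ∀ p ∈ X, #(A.bipartiteAbove I p) = 2 := by
  have hle : ∀ p ∈ X, 3 * #(A.bipartiteAbove I p) ≤ #(A.bipartiteAbove I p).offDiag + 4 :=
    fun p _ => three_mul_card_le_card_offDiag_add_four _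
  have hsum := (sum_le_sum hle).antisymm
    (sum_card_offDiag_add_four_le_sum_three_mul_card hA hX hAX hI)
  exact fun p hp => card_eq_two_of_three_mul_card_eq _ ((sum_eq_sum_iff_of_le hle).mp hsum p hp)

theorem pairwise_card_common_eq_one (hA : #A = s + 1) (hX : 2 * #X ≤ s * (s + 1))
    (hAX : ∀ l ∈ A, s ≤ #(X.bipartiteBelow I l))
    (hI : (A : Set Λ).Pairwise fun l m => #{p ∈ X | I p l ∧ I p m} ≤ 1) :
    (A : Set Λ).Pairwise fun l m => #{p ∈ X | I p l ∧ I p m} = 1 := by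
  have hle : ∀ q ∈ A.offDiag, #{p ∈ X | I p q.1 ∧ I p q.2} ≤ 1 := fun q hq =>
    hI (mem_offDiag.mp hq).1 (mem_offDiag.mp hq).2.1 (mem_offDiag.mp hq).2.2
  have hge : ∑ _q ∈ A.offDiag, 1 ≤ ∑ q ∈ A.offDiag, #{p ∈ X | I p q.1 ∧ I p q.2} := by
    calc ∑ _q ∈ A.offDiag, 1
        = #A * s := by
          rw [← card_eq_sum_ones, card_offDiag_of_card_eq_add_one A hA, hA, mul_comm]
      _ ≤ ∑ p ∈ X, #(A.bipartiteAbove I p) := card_mul_le_sum_card_bipartiteAbove hAX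
      _ = ∑ p ∈ X, #(A.bipartiteAbove I p).offDiag := sum_congr rfl fun p hp => by
          rw [offDiag_card, card_bipartiteAbove_eq_two hA hX hAX hI p hp]
      _ = ∑ q ∈ A.offDiag, #{p ∈ X | I p q.1 ∧ I p q.2} := sum_card_offDiag_bipartiteAbove
  intro l hl m hm hlm
  exact (sum_eq_sum_iff_of_le hle).mp ((sum_le_sum hle).antisymm hge) (l, m)
    (mem_offDiag.mpr ⟨hl, hm, hlm⟩)

end Incidence

namespace ProjLine

variable {K : Type} [Field K] {L M : ProjLine K}

theorem toSubmodule_injective : Function.Injective (toSubmodule (K := K)) := by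
  rintro ⟨_, _⟩ ⟨_, _⟩ rfl
  rfl

theorem finrank_inf_lt_two (h : L ≠ M) :
    Module.finrank K ↥(L.toSubmodule ⊓ M.toSubmodule) < 2 := by
  rw [← L.finrank_eq_two]
  refine Submodule.finrank_lt_finrank_of_lt (inf_lt_left.mpr fun hle => ?_)
  exact h (toSubmodule_injective
    (Submodule.eq_of_le_of_finrank_eq hle (L.finrank_eq_two.trans M.finrank_eq_two.symm)))

theorem submodule_eq_inf (h : L ≠ M) {p : P2 K} (hL : p ∈ L.points) (hM : p ∈ M.points) :
    p.submodule = L.toSubmodule ⊓ M.toSubmodule := by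
  refine Submodule.eq_of_le_of_finrank_le (le_inf hL hM) ?_
  rw [Projectivization.finrank_submodule]
  exact Nat.le_of_lt_succ (finrank_inf_lt_two h)

theorem subsingleton_points_inter (h : L ≠ M) : (L.points ∩ M.points).Subsingleton :=
  fun _ hp _ hq => Projectivization.submodule_injective <|
    (submodule_eq_inf h hp.1 hp.2).trans (submodule_eq_inf h hq.1 hq.2).symm

end ProjLine

namespace IsKConfig

variable {K : Type} [Field K] {s : ℕ} {X : Set (P2 K)} {d : Fin s → ℕ}
  {Xs : Fin s → Set (P2 K)} {Ls : Fin s → ProjLine K}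

theorem finite (hX : IsKConfig X d Xs Ls) : X.Finite := by
  rw [hX.union_eq]
  refine Set.finite_iUnion fun i => Set.finite_of_ncard_pos ?_
  rw [hX.card_eq]
  exact hX.one_le i

theorem ncard_le_sum (hX : IsKConfig X d Xs Ls) : X.ncard ≤ ∑ i, d i := by
  simpa only [hX.union_eq, hX.card_eq] using Set.ncard_iUnion_le_of_fintype Xs

theorem two_mul_ncard_le (hX : IsKConfig X (fun i : Fin s => i.1 + 1) Xs Ls) :
    2 * X.ncard ≤ s * (s + 1) := by
  have hsum : (∑ i : Fin s, (i.1 + 1)) * 2 = s * (s + 1) := by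
    have hgauss := sum_range_id_mul_two (s + 1)
    rwa [sum_range_succ', add_zero, Nat.add_sub_cancel, mul_comm (s + 1),
      ← Fin.sum_univ_eq_sum_range (fun i => i + 1)] at hgauss
  rw [mul_comm, ← hsum]
  exact Nat.mul_le_mul_right 2 hX.ncard_le_sum

end IsKConfig

theorem kconfig_splusone_lines_general {K : Type} [Field K] {s : ℕ} {X : Set (P2 K)}
    (hX : X.Finite) (hXcard : 2 * X.ncard ≤ s * (s + 1)) {A : Finset (ProjLine K)}
    (hA : #A = s + 1) (hAX : ∀ L ∈ A, s ≤ (X ∩ L.points).ncard) :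
    X = {p | ∃ L M, L ≠ M ∧ L ∈ A ∧ M ∈ A ∧ p ∈ L.points ∧ p ∈ M.points} := by
  classical
  lift X to Finset (P2 K) using hX
  let I (p : P2 K) (L : ProjLine K) : Prop := p ∈ L.points
  rw [Set.ncard_coe_finset] at hXcard
  have hIX : ∀ L ∈ A, s ≤ #(X.bipartiteBelow I L) := fun L hL => by
    rw [← Set.ncard_coe_finset, coe_bipartiteBelow]
    exact hAX L hL
  have hI : (A : Set (ProjLine K)).Pairwise fun L M => #{p ∈ X | I p L ∧ I p M} ≤ 1 :=
    fun L _ M _ hne => card_le_one.mpr fun p hp q hq =>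
      ProjLine.subsingleton_points_inter hne (mem_filter.mp hp).2 (mem_filter.mp hq).2
  ext p
  constructor
  · intro hp
    obtain ⟨L, hL, M, hM, hne⟩ := one_lt_card.mp
      (card_bipartiteAbove_eq_two hA hXcard hIX hI p hp).ge
    rw [mem_bipartiteAbove] at hL hM
    exact ⟨L, M, hne, hL.1, hM.1, hL.2, hM.2⟩
  · rintro ⟨L, M, hne, hL, hM, hpL, hpM⟩
    obtain ⟨q, hq⟩ := card_pos.mp (pairwise_card_common_eq_one hA hXcard hIX hI hL hM hne).ge
    obtain ⟨hqX, hqLM⟩ := mem_filter.mp hq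
    rwa [ProjLine.subsingleton_points_inter hne ⟨hpL, hpM⟩ hqLM]

/-- **Lemma (case of exactly `s+1` lines).** Let `X` be a k-configuration of
type `(1,2,…,s)`, `s ≥ 2`, with exactly `s + 1` lines each containing exactly
`s` points of `X`. Then the points of `X` are precisely the pairwise
intersection points of those lines. -/
theorem kconfig_splusone_lines {K : Type} [Field K] [IsAlgClosed K] {s : ℕ} (hs : 2 ≤ s)
    (X : Set (P2 K)) (Xs : Fin s → Set (P2 K)) (Ls : Fin s → ProjLine K)
    (hX : IsKConfig X (fun i : Fin s => i.1 + 1) Xs Ls)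
    (hfin : {L : ProjLine K | (X ∩ L.points).ncard = s}.Finite)
    (hcard : {L : ProjLine K | (X ∩ L.points).ncard = s}.ncard = s + 1) :
    X = {p : P2 K | ∃ L₁ L₂ : ProjLine K, L₁ ≠ L₂ ∧
      (X ∩ L₁.points).ncard = s ∧ (X ∩ L₂.points).ncard = s ∧
      p ∈ L₁.points ∧ p ∈ L₂.points} := by
  have hA : #hfin.toFinset = s + 1 := (Set.ncard_eq_toFinset_card _ hfin).symm.trans hcard
  simpa only [Set.Finite.mem_toFinset, Set.mem_ofPred_eq] using
    kconfig_splusone_lines_general hX.finite hX.two_mul_ncard_le hA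
      fun L hL => (hfin.mem_toFinset.mp hL).ge
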